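/- Continuous-time convergence of the circuit flow to a primal–dual solution (Theorem 2). Let f: ℝ^m → ℝ be μ-strongly convex and M-smooth (0 < μ ≤ M < ∞). Let a dynamic interconnect be given by a matrix A ∈ ℝ^{(τ−1)×σ} (τ ≥ m+1), a partition of {1,…,σ} into ℛ, ℒ, 𝒞, and diagonal matrices D_ℛ, D_ℒ, D_𝒞 with strictly positive diagonal entries, and assume it is admissible with respect to a selection matrix E ∈ ℝ^{n×m}. Let (x⋆, y⋆) be a primal–dual solution pair, i.e., y⋆ = ∇f(x⋆), x⋆ ∈ ℛ(Eᵀ), y⋆ ∈ 𝒩(E). Let (v, i, x, y): [0,∞) → ℝ^σ × ℝ^σ × ℝ^m × ℝ^m be a Lipschitz-continuous curve such that for every t ≥ 0: y(t) = ∇f(x(t)), A i(t) = (−y(t); 0), v(t) = Aᵀ(x(t); e(t)) for some e(t) ∈ ℝ^{τ−1−m}, v_ℛ(t) = D_ℛ i_ℛ(t); and for almost every t > 0: v_ℒ(t) = D_ℒ (d/dt) i_ℒ(t), i_𝒞(t) = D_𝒞 (d/dt) v_𝒞(t). Then lim_{t→∞} x(t) = x⋆ and lim_{t→∞} y(t)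 = y⋆. -/

import Mathlib

open Matrix MeasureTheory

/-- The continuous linear map `h ↦ ⟨g, h⟩` on `ℝ^m` (Euclidean inner product). -/
noncomputable def dotCLM {m : ℕ} (g : Fin m → ℝ) : (Fin m → ℝ) →L[ℝ] ℝ :=
  ∑ k, g k • ContinuousLinearMap.proj k

/-- `g` is the (Euclidean) gradient of `f` everywhere. -/
def HasGradient {m : ℕ} (f : (Fin m → ℝ) → ℝ) (g : (Fin m → ℝ) → Fin m → ℝ) : Prop :=
  ∀ x, HasFDerivAt f (dotCLM (g x)) x

/-- `f` is `μ`-strongly convex: `f − (μ/2)‖·‖²` is convex. -/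
def StronglyConvexFun {m : ℕ} (μ : ℝ) (f : (Fin m → ℝ) → ℝ) : Prop :=
  ConvexOn ℝ Set.univ (fun x => f x - μ / 2 * (x ⬝ᵥ x))

/-- The gradient `g` is `M`-Lipschitz (squared Euclidean form). -/
def GradLipschitz {m : ℕ} (M : ℝ) (g : (Fin m → ℝ) → Fin m → ℝ) : Prop :=
  ∀ x z : Fin m → ℝ, (g x - g z) ⬝ᵥ (g x - g z) ≤ M ^ 2 * ((x - z) ⬝ᵥ (x - z))

/-- Membership `(v, i) ∈ D_{x,y}` (equilibrium relations of the interconnect). -/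
def MemDxy {m p σ : ℕ} (A : Matrix (Fin m ⊕ Fin p) (Fin σ) ℝ)
    (Rset Lset Cset : Finset (Fin σ)) (dR : Fin σ → ℝ)
    (x y : Fin m → ℝ) (v i : Fin σ → ℝ) : Prop :=
  (∃ e : Fin p → ℝ,
      A.mulVec i = Sum.elim (fun a => -(y a)) (fun _ => (0 : ℝ)) ∧
      v = A.transpose.mulVec (Sum.elim x e)) ∧
  (∀ j ∈ Rset, v j = dR j * i j) ∧
  (∀ j ∈ Lset, v j = 0) ∧
  (∀ j ∈ Cset, i j = 0)

/-- `E` is a selection matrix. -/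
def IsSelectionMatrix {n m : ℕ} (E : Matrix (Fin n) (Fin m) ℝ) : Prop :=
  ∃ netOf : Fin m → Fin n, Function.Surjective netOf ∧
    ∀ i j, E i j = if netOf j = i then 1 else 0

/-- Admissibility of the dynamic interconnect with respect to `E`. -/
def AdmissibleInterconnect {m p σ n : ℕ} (A : Matrix (Fin m ⊕ Fin p) (Fin σ) ℝ)
    (Rset Lset Cset : Finset (Fin σ)) (dR : Fin σ → ℝ)
    (E : Matrix (Fin n) (Fin m) ℝ) : Prop :=
  ∀ x y : Fin m → ℝ,
    (∃ v i : Fin σ → ℝ, MemDxy A Rset Lset Cset dR x y v i) ↔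
      ((∃ z : Fin n → ℝ, x = E.transpose.mulVec z) ∧ E.mulVec y = 0)

lemma dotCLM_apply_aux {m : ℕ} (g h : Fin m → ℝ) : dotCLM g h = g ⬝ᵥ h := by
  simp [dotCLM, dotProduct]

lemma grad_strong_mono {m : ℕ} (μ : ℝ) (f : (Fin m → ℝ) → ℝ) (g : (Fin m → ℝ) → Fin m → ℝ)
    (hgrad : HasGradient f g) (hsc : StronglyConvexFun μ f) (x z : Fin m → ℝ) :
    μ * ((x - z) ⬝ᵥ (x - z)) ≤ (x - z) ⬝ᵥ (g x - g z) := by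
  have hconv := ConvexOn.comp_affineMap (AffineMap.lineMap z x : ℝ →ᵃ[ℝ] (Fin m → ℝ)) hsc
  have hd : ∀ s : ℝ, HasDerivAt
      ((fun x => f x - μ / 2 * (x ⬝ᵥ x)) ∘ (AffineMap.lineMap z x : ℝ →ᵃ[ℝ] (Fin m → ℝ)))
      (g (AffineMap.lineMap z x s) ⬝ᵥ (x - z)
        - μ * ((AffineMap.lineMap z x s : Fin m → ℝ) ⬝ᵥ (x - z))) s := by
    intro s
    have hl : HasDerivAt (AffineMap.lineMap z x : ℝ → (Fin m → ℝ)) (x - z) s :=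
      AffineMap.hasDerivAt_lineMap
    have h1 := (hgrad (AffineMap.lineMap z x s)).comp_hasDerivAt s hl
    rw [dotCLM_apply_aux] at h1
    have hk : ∀ k, HasDerivAt (fun s => (AffineMap.lineMap z x s : Fin m → ℝ) k) ((x - z) k) s :=
      fun k => (hasDerivAt_pi.1 hl) k
    have h2 : HasDerivAt (fun s => ∑ k, (AffineMap.lineMap z x s : Fin m → ℝ) k *
        (AffineMap.lineMap z x s : Fin m → ℝ) k) _ s :=
      HasDerivAt.fun_sum (fun k _ => (hk k).mul (hk k))
    have h3 := h1.sub (h2.const_mul (μ / 2))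
    refine h3.congr_deriv ?_
    congr 1
    simp only [dotProduct, Finset.mul_sum]
    refine Finset.sum_congr rfl fun k _ => ?_
    ring
  have a := hconv.le_slope_of_hasDerivAt (x := 0) (y := 1) (by simp) (by simp) one_pos (hd 0)
  have b := hconv.slope_le_of_hasDerivAt (x := 0) (y := 1) (by simp) (by simp) one_pos (hd 1)
  have c := a.trans b
  simp only [AffineMap.lineMap_apply_zero, AffineMap.lineMap_apply_one] at c
  rw [dotProduct_comm (x - z) (g x - g z)]
  simp only [sub_dotProduct] at c ⊢
  linarith

lemma ac_sum_aux {ι : Type*} (s : Finset ι) (F : ι → ℝ → ℝ) (a b : ℝ)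
    (h : ∀ j ∈ s, AbsolutelyContinuousOnInterval (F j) a b) :
    AbsolutelyContinuousOnInterval (fun t => ∑ j ∈ s, F j t) a b := by
  classical
  induction s using Finset.induction_on with
  | empty =>
    simp only [Finset.sum_empty]
    exact (LipschitzWith.const (0 : ℝ)).lipschitzOnWith.absolutelyContinuousOnInterval
  | insert j s hj ih =>
    simp only [Finset.sum_insert hj]
    exact (h j (by simp)).add (ih fun k hk => h k (by simp [hk]))

lemma barbalat_aux (V φ : ℝ → ℝ) (μ K : ℝ) (hμ : 0 < μ) (hK : 0 ≤ K) (hV : ∀ t, 0 ≤ V t)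
    (hφ : ∀ s t, 0 ≤ s → 0 ≤ t → |φ s - φ t| ≤ K * |s - t|)
    (hdec : ∀ a b c, 0 ≤ a → a ≤ b → (∀ s ∈ Set.Ioc a b, c ≤ φ s ^ 2) →
      V b ≤ V a - μ * c * (b - a)) :
    Filter.Tendsto φ Filter.atTop (nhds 0) := by
  have hanti : Antitone (fun t => V (max t 0)) := by
    intro a b hab
    have := hdec (max a 0) (max b 0) 0 (le_max_right _ _) (max_le_max_right 0 hab)
      (fun s _ => sq_nonneg _)
    simpa using this
  have hbdd : BddBelow (Set.range (fun t => V (max t 0))) :=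
    ⟨0, by rintro _ ⟨t, rfl⟩; exact hV _⟩
  have hlim := tendsto_atTop_ciInf hanti hbdd
  set L := ⨅ t, V (max t 0) with hL
  rw [Metric.tendsto_atTop]
  intro ε hε
  set δ := ε / (2 * (K + 1)) with hδ
  have hδ0 : 0 < δ := by positivity
  have hKδ : K * δ ≤ ε / 2 := by
    rw [hδ]
    have : K * (ε / (2 * (K + 1))) = (K / (K + 1)) * (ε / 2) := by field_simp
    rw [this]
    have h1 : K / (K + 1) ≤ 1 := by rw [div_le_one (by positivity)]; linarith
    nlinarith
  have hη : 0 < μ * (ε / 2) ^ 2 * δ := by positivity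
  have hev := hlim.eventually (gt_mem_nhds (show L < L + μ * (ε / 2) ^ 2 * δ by linarith))
  obtain ⟨N, hN⟩ := Filter.eventually_atTop.1 hev
  refine ⟨max N 0, fun t ht => ?_⟩
  have htN : N ≤ t := (le_max_left _ _).trans ht
  have ht0 : 0 ≤ t := (le_max_right _ _).trans ht
  have h1 := hN t htN
  rw [max_eq_left ht0] at h1
  rw [Real.dist_eq, sub_zero]
  by_contra hcon
  push Not at hcon
  have h2 := hdec t (t + δ) ((ε / 2) ^ 2) ht0 (by linarith) (by
    intro s hs
    have h3 := hφ s t (ht0.trans hs.1.le) ht0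
    have h4 : |s - t| ≤ δ := by rw [abs_of_nonneg] <;> linarith [hs.1, hs.2]
    have h5 : K * |s - t| ≤ K * δ := mul_le_mul_of_nonneg_left h4 hK
    have h6 : |φ t| ≤ |φ s| + |φ s - φ t| := by
      have := abs_sub_abs_le_abs_sub (φ t) (φ s)
      rw [abs_sub_comm] at this
      linarith
    rw [← sq_abs (φ s)]
    have h7 : ε / 2 ≤ |φ s| := by linarith
    exact pow_le_pow_left₀ (by positivity) h7 2)
  have h3 : L ≤ V (t + δ) := by
    have := ciInf_le hbdd (t + δ)
    rwa [max_eq_left (by linarith)] at this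
  have h4 : t + δ - t = δ := by ring
  rw [h4] at h2
  linarith

/-- **Continuous-time convergence of the circuit flow to a primal–dual solution
(Theorem 2).**  Along any Lipschitz solution curve of an admissible dynamic
interconnect composed with `∇f` (`f` strongly convex and smooth),
`x(t) → x⋆` and `y(t) → y⋆`. -/
theorem circuit_flow_convergence {m p σ n : ℕ} (μ M : ℝ)
    (hμ : 0 < μ) (hμM : μ ≤ M)
    (f : (Fin m → ℝ) → ℝ) (g : (Fin m → ℝ) → Fin m → ℝ)
    (hgrad : HasGradient f g)
    (hsc : StronglyConvexFun μ f) (hsm : GradLipschitz M g)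
    (A : Matrix (Fin m ⊕ Fin p) (Fin σ) ℝ)
    (Rset Lset Cset : Finset (Fin σ))
    (hRL : Disjoint Rset Lset) (hRC : Disjoint Rset Cset) (hLC : Disjoint Lset Cset)
    (hcover : Rset ∪ Lset ∪ Cset = Finset.univ)
    (dR dL dC : Fin σ → ℝ)
    (hdR : ∀ j ∈ Rset, 0 < dR j) (hdL : ∀ j ∈ Lset, 0 < dL j)
    (hdC : ∀ j ∈ Cset, 0 < dC j)
    (E : Matrix (Fin n) (Fin m) ℝ) (hE : IsSelectionMatrix E)
    (hadm : AdmissibleInterconnect A Rset Lset Cset dR E)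
    -- the primal–dual solution pair
    (xstar ystar : Fin m → ℝ)
    (hystar : ystar = g xstar)
    (hprim : ∃ z : Fin n → ℝ, xstar = E.transpose.mulVec z)
    (hdual : E.mulVec ystar = 0)
    -- the solution curve
    (v i : ℝ → Fin σ → ℝ) (x y : ℝ → Fin m → ℝ)
    (hlip : ∃ K : NNReal, LipschitzOnWith K (fun t => (v t, i t, x t, y t)) (Set.Ici 0))
    (hstatic : ∀ t ≥ (0 : ℝ),
      y t = g (x t) ∧
      A.mulVec (i t) = Sum.elim (fun a => -(y t a)) (fun _ => (0 : ℝ)) ∧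
      (∃ e : Fin p → ℝ, v t = A.transpose.mulVec (Sum.elim (x t) e)) ∧
      (∀ j ∈ Rset, v t j = dR j * i t j))
    (hdyn : ∀ᵐ t ∂(volume : Measure ℝ), 0 < t →
      (∀ j ∈ Lset, HasDerivAt (fun s => i s j) ((dL j)⁻¹ * v t j) t) ∧
      (∀ j ∈ Cset, HasDerivAt (fun s => v s j) ((dC j)⁻¹ * i t j) t)) :
    Filter.Tendsto x Filter.atTop (nhds xstar) ∧
    Filter.Tendsto y Filter.atTop (nhds ystar) := by
  obtain ⟨K, hK⟩ := hlip
  obtain ⟨vs, is, ⟨es, hAs, hvs⟩, hRs, hLs, hCs⟩ := (hadm xstar ystar).2 ⟨hprim, hdual⟩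
  have hlv : ∀ j, LipschitzOnWith K (fun t => v t j) (Set.Ici 0) := fun j =>
    LipschitzOnWith.of_dist_le_mul fun a ha b hb =>
      ((dist_le_pi_dist (v a) (v b) j).trans (le_max_left _ _)).trans (hK.dist_le_mul a ha b hb)
  have hli : ∀ j, LipschitzOnWith K (fun t => i t j) (Set.Ici 0) := fun j =>
    LipschitzOnWith.of_dist_le_mul fun a ha b hb =>
      (((dist_le_pi_dist (i a) (i b) j).trans (le_max_left _ _)).trans (le_max_right _ _)).trans
        (hK.dist_le_mul a ha b hb)
  have hlx : ∀ j, LipschitzOnWith K (fun t => x t j) (Set.Ici 0) := fun j =>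
    LipschitzOnWith.of_dist_le_mul fun a ha b hb =>
      ((((dist_le_pi_dist (x a) (x b) j).trans (le_max_left _ _)).trans
        (le_max_right _ _)).trans (le_max_right _ _)).trans (hK.dist_le_mul a ha b hb)
  -- the energy
  let V : ℝ → ℝ := fun t => (∑ j ∈ Lset, dL j / 2 * ((i t j - is j) * (i t j - is j)))
    + ∑ j ∈ Cset, dC j / 2 * ((v t j - vs j) * (v t j - vs j))
  have hV0 : ∀ t, 0 ≤ V t := fun t => add_nonneg
    (Finset.sum_nonneg fun j hj => mul_nonneg (by have := hdL j hj; positivity) (mul_self_nonneg _))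
    (Finset.sum_nonneg fun j hj => mul_nonneg (by have := hdC j hj; positivity) (mul_self_nonneg _))
  have hVac : ∀ a b, 0 ≤ a → a ≤ b → AbsolutelyContinuousOnInterval V a b := by
    intro a b ha hab
    have hsub : Set.uIcc a b ⊆ Set.Ici 0 := by
      rw [Set.uIcc_of_le hab]; exact fun s hs => ha.trans hs.1
    have hc : ∀ c : ℝ, AbsolutelyContinuousOnInterval (fun _ : ℝ => c) a b := fun c =>
      (LipschitzWith.const c).lipschitzOnWith.absolutelyContinuousOnInterval
    refine AbsolutelyContinuousOnInterval.add (ac_sum_aux _ _ _ _ fun j _ => ?_)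
      (ac_sum_aux _ _ _ _ fun j _ => ?_)
    · have h := ((hli j).mono hsub).absolutelyContinuousOnInterval.sub (hc (is j))
      exact (h.mul h).const_mul _
    · have h := ((hlv j).mono hsub).absolutelyContinuousOnInterval.sub (hc (vs j))
      exact (h.mul h).const_mul _
  -- power balance
  have hpow : ∀ t, 0 ≤ t → (∑ j ∈ Lset, (i t j - is j) * v t j)
      + (∑ j ∈ Cset, (v t j - vs j) * i t j) ≤ -(μ * ((x t - xstar) ⬝ᵥ (x t - xstar))) := by
    intro t ht
    obtain ⟨hy, hA, ⟨e, hv⟩, hR⟩ := hstatic t ht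
    have h1 : (v t - vs) ⬝ᵥ (i t - is) = -((x t - xstar) ⬝ᵥ (y t - ystar)) := by
      rw [hv, hvs, ← Matrix.mulVec_sub, Matrix.mulVec_transpose, ← Matrix.dotProduct_mulVec,
        Matrix.mulVec_sub, hA, hAs]
      simp only [dotProduct, Fintype.sum_sum_type, Pi.sub_apply, Sum.elim_inl, Sum.elim_inr,
        sub_self, mul_zero, Finset.sum_const_zero, add_zero, ← Finset.sum_neg_distrib]
      exact Finset.sum_congr rfl fun k _ => by ring
    have h2 : (v t - vs) ⬝ᵥ (i t - is) = (∑ j ∈ Rset, dR j * (i t j - is j) ^ 2)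
        + (∑ j ∈ Lset, (i t j - is j) * v t j) + (∑ j ∈ Cset, (v t j - vs j) * i t j) := by
      have hd : Disjoint (Rset ∪ Lset) Cset := Finset.disjoint_union_left.2 ⟨hRC, hLC⟩
      rw [dotProduct, ← hcover, Finset.sum_union hd, Finset.sum_union hRL]
      congr 1
      · congr 1
        · refine Finset.sum_congr rfl fun j hj => ?_
          simp only [Pi.sub_apply, hR j hj, hRs j hj]; ring
        · refine Finset.sum_congr rfl fun j hj => ?_
          simp only [Pi.sub_apply, hLs j hj]; ring
      · refine Finset.sum_congr rfl fun j hj => ?_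
        simp only [Pi.sub_apply, hCs j hj]; ring
    have h3 : 0 ≤ ∑ j ∈ Rset, dR j * (i t j - is j) ^ 2 :=
      Finset.sum_nonneg fun j hj => mul_nonneg (hdR j hj).le (sq_nonneg _)
    have h4 := grad_strong_mono μ f g hgrad hsc (x t) xstar
    rw [← hy, ← hystar] at h4
    linarith
  have hVd : ∀ᵐ t ∂(volume : Measure ℝ), 0 < t →
      deriv V t ≤ -(μ * ((x t - xstar) ⬝ᵥ (x t - xstar))) := by
    filter_upwards [hdyn] with t h ht
    obtain ⟨hL, hC⟩ := h ht
    have h1 : HasDerivAt V ((∑ j ∈ Lset, (i t j - is j) * v t j)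
        + ∑ j ∈ Cset, (v t j - vs j) * i t j) t := by
      refine HasDerivAt.add (HasDerivAt.fun_sum fun j hj => ?_)
        (HasDerivAt.fun_sum fun j hj => ?_)
      · have h := (hL j hj).sub_const (is j)
        refine ((h.mul h).const_mul (dL j / 2)).congr_deriv ?_
        have := (hdL j hj).ne'
        field_simp
        ring
      · have h := (hC j hj).sub_const (vs j)
        refine ((h.mul h).const_mul (dC j / 2)).congr_deriv ?_
        have := (hdC j hj).ne'
        field_simp
        ring
    rw [h1.deriv]
    exact hpow t ht.le
  have hx : Filter.Tendsto x Filter.atTop (nhds xstar) := by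
    rw [tendsto_pi_nhds]
    intro k
    rw [← tendsto_sub_nhds_zero_iff]
    refine barbalat_aux V (fun t => x t k - xstar k) μ K hμ K.2 hV0 ?_ ?_
    · intro s t hs ht
      have := (hlx k).dist_le_mul s hs t ht
      rw [Real.dist_eq, Real.dist_eq] at this
      rw [sub_sub_sub_cancel_right]
      exact this
    · intro a b c ha hab hc
      have hac := hVac a b ha hab
      have hint := hac.integral_deriv_eq_sub
      have hle : ∫ t in a..b, deriv V t ≤ ∫ _ in a..b, -(μ * c) := by
        rw [intervalIntegral.integral_of_le hab, intervalIntegral.integral_of_le hab]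
        refine setIntegral_mono_on_ae hac.intervalIntegrable_deriv.1
          (intervalIntegrable_const (c := -(μ * c))).1 measurableSet_Ioc ?_
        filter_upwards [hVd] with t h hts
        refine (h (ha.trans_lt hts.1)).trans ?_
        have h1 : (x t k - xstar k) ^ 2 ≤ (x t - xstar) ⬝ᵥ (x t - xstar) := by
          rw [dotProduct, sq]
          exact Finset.single_le_sum (f := fun k => (x t - xstar) k * (x t - xstar) k)
            (fun j _ => mul_self_nonneg _) (Finset.mem_univ k)
        have := mul_le_mul_of_nonneg_left ((hc t hts).trans h1) hμ.le
        linarith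
      rw [hint, intervalIntegral.integral_const, smul_eq_mul] at hle
      linarith
  refine ⟨hx, ?_⟩
  have hdot : Filter.Tendsto (fun t => M ^ 2 * ((x t - xstar) ⬝ᵥ (x t - xstar))) Filter.atTop
      (nhds 0) := by
    have hcont : Continuous (fun w : Fin m → ℝ => M ^ 2 * ((w - xstar) ⬝ᵥ (w - xstar))) := by
      unfold dotProduct; fun_prop
    have := (hcont.tendsto xstar).comp hx
    simp only [sub_self, dotProduct_zero, mul_zero] at this
    exact this
  rw [tendsto_pi_nhds]
  intro k
  rw [← tendsto_sub_nhds_zero_iff]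
  have hsq : Filter.Tendsto (fun t => (y t k - ystar k) ^ 2) Filter.atTop (nhds 0) := by
    refine tendsto_of_tendsto_of_tendsto_of_le_of_le' tendsto_const_nhds hdot
      (Filter.Eventually.of_forall fun t => sq_nonneg _) ?_
    filter_upwards [Filter.eventually_ge_atTop (0 : ℝ)] with t ht
    have h1 : (y t k - ystar k) ^ 2 ≤ (y t - ystar) ⬝ᵥ (y t - ystar) := by
      rw [dotProduct, sq]
      exact Finset.single_le_sum (f := fun k => (y t - ystar) k * (y t - ystar) k)
        (fun j _ => mul_self_nonneg _) (Finset.mem_univ k)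
    refine h1.trans ?_
    rw [(hstatic t ht).1, hystar]
    exact hsm _ _
  have := (Real.continuous_sqrt.tendsto 0).comp hsq
  rw [Real.sqrt_zero] at this
  rw [tendsto_zero_iff_abs_tendsto_zero]
  refine this.congr fun t => ?_
  simp [Real.sqrt_sq_eq_abs]
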